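/- Let C̃ be a symmetric positive definite n×n real matrix, x̃ ∈ ℝⁿ, J an m×n real matrix of rank m (so m ≤ n), and v ∈ ℝᵐ. Then the matrix J C̃ Jᵀ is invertible, the point x′ = x̃ − C̃ Jᵀ (J C̃ Jᵀ)⁻¹ (J x̃ + v) satisfies J x′ + v = 0, and x′ is the unique minimizer of the function x ↦ (x − x̃)ᵀ C̃⁻¹ (x − x̃) over the affine set {x ∈ ℝⁿ : J x + v = 0}. -/

import Mathlib

/-!
Full row rank makes `u ↦ u ᵥ* J` injective, so `J C Jᵀ` inherits positive definiteness from `C` and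
is therefore invertible. Feasibility of `x'` is then a direct computation. For minimality,
`C⁻¹ (x' - xt) = -Jᵀ l` with the Lagrange multiplier `l = (J C Jᵀ)⁻¹ (J xt + v)`, and any feasible
`x` differs from `x'` by some `d` in the kernel of `J`. Hence `d` is `C⁻¹`-orthogonal to `x' - xt`,
and by Pythagoras the objective at `x` exceeds the one at `x'` by exactly `dᵀ C⁻¹ d`, which is
positive unless `d = 0`.
-/

open Matrix

theorem vecMul_injective_of_rank_eq {n m : ℕ} {J : Matrix (Fin m) (Fin n) ℝ}
    (hJ : J.rank = m) : Function.Injective J.vecMul := by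
  rw [Matrix.vecMul_injective_iff, linearIndependent_iff_card_eq_finrank_span, Set.finrank,
    ← Matrix.rank_eq_finrank_span_row, hJ, Fintype.card_fin]

/-- Pythagoras for the quadratic form of a symmetric matrix: if `d` is `A`-orthogonal to `w`, the
cross terms vanish. -/
theorem quadratic_add_of_orthogonal {n : ℕ} {A : Matrix (Fin n) (Fin n) ℝ} (hA : A.IsSymm)
    {d w : Fin n → ℝ} (h : d ⬝ᵥ (A *ᵥ w) = 0) :
    (d + w) ⬝ᵥ (A *ᵥ (d + w)) = d ⬝ᵥ (A *ᵥ d) + w ⬝ᵥ (A *ᵥ w) := by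
  have h' : w ⬝ᵥ (A *ᵥ d) = 0 := by
    rw [dotProduct_mulVec, ← mulVec_transpose, hA.eq, dotProduct_comm, h]
  rw [mulVec_add, add_dotProduct, dotProduct_add, dotProduct_add, h, h']
  ring

/-- **Kinematic fit with linear constraints, `l = 0`: explicit solution.**
For a symmetric positive definite covariance `C`, measured vector `xt`, a
full-rank constraint Jacobian `J` (rank `m`) and constraint offset `v`, the
matrix `J C Jᵀ` is invertible, the point
`x′ = xt − C Jᵀ (J C Jᵀ)⁻¹ (J xt + v)` satisfies the constraints
`J x′ + v = 0`, and it is the unique minimizer of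
`x ↦ (x − xt)ᵀ C⁻¹ (x − xt)` on `{x | J x + v = 0}`. -/
theorem linear_constraints_unique_minimizer
    {n m : ℕ}
    (C : Matrix (Fin n) (Fin n) ℝ) (hCsymm : C.IsSymm) (hCpd : C.PosDef)
    (xt : Fin n → ℝ)
    (J : Matrix (Fin m) (Fin n) ℝ) (hJ : J.rank = m)
    (v : Fin m → ℝ)
    (x' : Fin n → ℝ)
    (hx' : x' = xt - (C * Jᵀ * (J * C * Jᵀ)⁻¹) *ᵥ (J *ᵥ xt + v)) :
    IsUnit (J * C * Jᵀ) ∧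
    J *ᵥ x' + v = 0 ∧
    (∀ x : Fin n → ℝ, J *ᵥ x + v = 0 →
      (x' - xt) ⬝ᵥ (C⁻¹ *ᵥ (x' - xt)) ≤ (x - xt) ⬝ᵥ (C⁻¹ *ᵥ (x - xt))) ∧
    (∀ x : Fin n → ℝ, J *ᵥ x + v = 0 →
      (x - xt) ⬝ᵥ (C⁻¹ *ᵥ (x - xt)) = (x' - xt) ⬝ᵥ (C⁻¹ *ᵥ (x' - xt)) → x = x') := by
  have hS : IsUnit (J * C * Jᵀ) := by
    have h := hCpd.mul_mul_conjTranspose_same (vecMul_injective_of_rank_eq hJ)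
    rw [conjTranspose_eq_transpose_of_trivial] at h
    exact h.isUnit
  have hSdet := (Matrix.isUnit_iff_isUnit_det _).1 hS
  have hCdet := (Matrix.isUnit_iff_isUnit_det _).1 hCpd.isUnit
  have hfeas : J *ᵥ x' + v = 0 := by
    have h : J * (C * Jᵀ * (J * C * Jᵀ)⁻¹) = 1 := by
      rw [← Matrix.mul_assoc, ← Matrix.mul_assoc, Matrix.mul_nonsing_inv _ hSdet]
    rw [hx', mulVec_sub, mulVec_mulVec, h, one_mulVec]
    abel
  have hstat : C⁻¹ *ᵥ (x' - xt) = -(Jᵀ *ᵥ ((J * C * Jᵀ)⁻¹ *ᵥ (J *ᵥ xt + v))) := by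
    have h : x' - xt = -((C * Jᵀ * (J * C * Jᵀ)⁻¹) *ᵥ (J *ᵥ xt + v)) := by
      rw [hx']; abel
    rw [h, mulVec_neg, mulVec_mulVec, mulVec_mulVec, Matrix.mul_assoc C,
      Matrix.nonsing_inv_mul_cancel_left _ _ hCdet]
  have hCinv : C⁻¹.IsSymm := by
    rw [Matrix.IsSymm, transpose_nonsing_inv, hCsymm.eq]
  have key : ∀ x : Fin n → ℝ, J *ᵥ x + v = 0 →
      (x - xt) ⬝ᵥ (C⁻¹ *ᵥ (x - xt)) =
        (x - x') ⬝ᵥ (C⁻¹ *ᵥ (x - x')) + (x' - xt) ⬝ᵥ (C⁻¹ *ᵥ (x' - xt)) := by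
    intro x hx
    have hd : J *ᵥ (x - x') = 0 := by
      rw [mulVec_sub, sub_eq_zero]
      exact add_right_cancel (hx.trans hfeas.symm)
    have horth : (x - x') ⬝ᵥ (C⁻¹ *ᵥ (x' - xt)) = 0 := by
      rw [hstat, dotProduct_neg, dotProduct_mulVec, vecMul_transpose, hd, zero_dotProduct,
        neg_zero]
    rw [← quadratic_add_of_orthogonal hCinv horth, sub_add_sub_cancel]
  have hpos : ∀ d : Fin n → ℝ, d ≠ 0 → 0 < d ⬝ᵥ (C⁻¹ *ᵥ d) := fun d hd => by
    simpa using hCpd.inv.dotProduct_mulVec_pos hd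
  refine ⟨hS, hfeas, fun x hx => ?_, fun x hx heq => ?_⟩
  · rw [key x hx]
    rcases eq_or_ne (x - x') 0 with h | h
    · simp [h]
    · linarith [hpos _ h]
  · by_contra hne
    linarith [key x hx, hpos _ (sub_ne_zero.2 hne)]
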